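/- arXiv:1810.09287 — 3 statements merged into one kernel-verified Lean document; each statement's English description precedes it below -/
import Mathlib

section
/- Let A = (A,Q,δ,I,F) be an NFA over an alphabet A and let P = (τ: 𝔼* → T, G) be a tagging compatible with A. Then the language K[A,P] ⊆ (A×T)* is recognized by a monoid morphism β: (A×T)* → N into a finite monoid N with |N| ≤ |Q|² + 2. -/
/-! Infrastructure: NFAs with an explicit finite set of transitions, taggings over the
two-letter alphabet `𝔼 = Bool`, the relabeled NFA `A[P]`, the languages `K[A,P]` and
`L[A,P]`, and recognition of a language by a monoid morphism. The disjoint union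
`A ∪ 𝔼` is modelled as the sum type `A ⊕ Bool`. -/

/-- A nondeterministic finite automaton with a finite set `trans` of transitions. -/
structure NFA' (A Q : Type) where
  trans : Finset (Q × A × Q)
  start : Finset Q
  accept : Finset Q

namespace NFA'

variable {A Q T : Type}

/-- `Path M q w r` : the word `w` labels a run from state `q` to state `r`. -/
inductive Path (M : NFA' A Q) : Q → List A → Q → Prop
  | nil (q : Q) : Path M q [] q
  | cons {q r s : Q} {a : A} {w : List A} :
      (q, a, r) ∈ M.trans → Path M r w s → Path M q (a :: w) s

/-- The language recognized by an NFA. -/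
def lang (M : NFA' A Q) : Language A :=
  {w | ∃ q ∈ M.start, ∃ r ∈ M.accept, M.Path q w r}

/-- The NFA `A[P]`: each transition gets relabeled by a distinct letter of `A × T`;
the choice of distinct tags for the transitions (coming from the fixed linear orders on
`δ` and `G`) is recorded by the injection `ι`. -/
def relabel [DecidableEq Q] [DecidableEq A] [DecidableEq T]
    (M : NFA' A Q) (ι : {x // x ∈ M.trans} → T) : NFA' (A × T) Q where
  trans := M.trans.attach.image (fun x => (x.1.1, (x.1.2.1, ι x), x.1.2.2))
  start := M.start
  accept := M.accept

end NFA'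

/-- A morphism `α : A* → M` recognizes `L` when `L = α⁻¹(F)` for some `F ⊆ M`. -/
def Recognizes {A M : Type} [Monoid M] (α : FreeMonoid A →* M) (L : Language A) : Prop :=
  ∃ F : Set M, L = {w : List A | α (FreeMonoid.ofList w) ∈ F}

/-- The language `K[A,P] ⊆ (A × T)*` recognized by the relabeled NFA `A[P]`. -/
def KAP {A Q T : Type} [DecidableEq Q] [DecidableEq A] [DecidableEq T]
    (M : NFA' A Q) (ι : {x // x ∈ M.trans} → T) : Language (A × T) :=
  (M.relabel ι).lang

/-- The language `L[A,P] = 𝔼* · μ⁻¹(K[A,P]) ⊆ (A ∪ 𝔼)*`, where a word of `(A𝔼*)*` is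
(uniquely) decomposed as `a₁w₁ ⋯ aₘwₘ` (`aⱼ ∈ A`, `wⱼ ∈ 𝔼*`) and
`μ(a₁w₁ ⋯ aₘwₘ) = (a₁,τ(w₁)) ⋯ (aₘ,τ(wₘ))`. -/
def LAP {A Q T : Type} [DecidableEq Q] [DecidableEq A] [DecidableEq T] [Monoid T]
    (M : NFA' A Q) (τ : FreeMonoid Bool →* T) (ι : {x // x ∈ M.trans} → T) :
    Language (A ⊕ Bool) :=
  {w | ∃ (w₀ : List Bool) (l : List (A × List Bool)),
      w = w₀.map Sum.inr ++ (l.map (fun p => Sum.inl p.1 :: p.2.map Sum.inr)).flatten ∧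
      (l.map (fun p => (p.1, τ (FreeMonoid.ofList p.2)))) ∈ KAP M ι}

/-- Brandt-type semigroup on pairs of states, with a zero. -/
inductive PairSem (Q : Type) where
  | zero : PairSem Q
  | pair (q r : Q) : PairSem Q

/-- The product of `PairSem`. -/
def PairSem.mul' {Q : Type} [DecidableEq Q] : PairSem Q → PairSem Q → PairSem Q
  | .pair p q, .pair r s => if q = r then .pair p s else .zero
  | .pair _ _, .zero => .zero
  | .zero, _ => .zero

instance PairSem.instSemigroup {Q : Type} [DecidableEq Q] : Semigroup (PairSem Q) where
  mul := PairSem.mul'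
  mul_assoc x y z := by
    change (x.mul' y).mul' z = x.mul' (y.mul' z)
    cases x <;> cases y <;> cases z <;> grind [PairSem.mul']

theorem PairSem.mul_eq_some {Q : Type} [DecidableEq Q] (x y : PairSem Q) (q r : Q) :
    x * y = .pair q r ↔ ∃ p, x = .pair q p ∧ y = .pair p r := by
  change x.mul' y = _ ↔ _
  cases x <;> cases y <;> grind [PairSem.mul']

/-- `PairSem` is an option type. -/
def PairSem.equiv (Q : Type) : PairSem Q ≃ Option (Q × Q) where
  toFun x := match x with
    | .zero => none
    | .pair q r => some (q, r)
  invFun x := match x with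
    | none => .zero
    | some (q, r) => .pair q r
  left_inv x := by cases x <;> rfl
  right_inv x := by rcases x with _ | ⟨q, r⟩ <;> rfl

theorem NFA'.path_cons_iff {A Q : Type} (M : NFA' A Q) (q s : Q) (a : A) (w : List A) :
    M.Path q (a :: w) s ↔ ∃ r, (q, a, r) ∈ M.trans ∧ M.Path r w s := by
  constructor
  · intro h
    cases h with
    | cons h1 h2 => exact ⟨_, h1, h2⟩
  · rintro ⟨r, h1, h2⟩
    exact .cons h1 h2

theorem NFA'.path_nil_iff {A Q : Type} (M : NFA' A Q) (q s : Q) :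
    M.Path q [] s ↔ q = s := by
  constructor
  · intro h
    cases h
    rfl
  · rintro rfl
    exact .nil _

theorem NFA'.exists_letter {A Q : Type} (M : NFA' A Q)
    (hM : ∀ q r q' r' a, (q, a, r) ∈ M.trans → (q', a, r') ∈ M.trans → q = q' ∧ r = r') (a : A) :
    ∃ s : PairSem Q, ∀ q r, (q, a, r) ∈ M.trans ↔ s = PairSem.pair q r := by
  by_cases h : ∃ q r, (q, a, r) ∈ M.trans
  · obtain ⟨q, r, h⟩ := h
    refine ⟨PairSem.pair q r, fun q' r' => ⟨fun h' => ?_, fun h' => ?_⟩⟩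
    · obtain ⟨rfl, rfl⟩ := hM _ _ _ _ _ h h'
      rfl
    · cases h'
      exact h
  · refine ⟨.zero, fun q' r' => ⟨fun h' => (h ⟨_, _, h'⟩).elim, fun h' => ?_⟩⟩
    cases h'

theorem NFA'.lift_spec {A Q : Type} [DecidableEq Q] (M : NFA' A Q) (f : A → PairSem Q)
    (hf : ∀ a q r, (q, a, r) ∈ M.trans ↔ f a = PairSem.pair q r) (w : List A) :
    (w = [] ∧ FreeMonoid.lift (fun a => (f a : WithOne (PairSem Q))) (FreeMonoid.ofList w) = 1) ∨
    ∃ s : PairSem Q,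
      FreeMonoid.lift (fun a => (f a : WithOne (PairSem Q))) (FreeMonoid.ofList w) = s ∧
      ∀ q r, M.Path q w r ↔ s = PairSem.pair q r := by
  induction w with
  | nil => exact .inl ⟨rfl, by simp⟩
  | cons a w ih =>
    right
    rcases ih with ⟨rfl, h⟩ | ⟨s, h, hs⟩
    · refine ⟨f a, ?_, fun q r => ?_⟩
      · rw [FreeMonoid.ofList_cons, map_mul, h, mul_one, FreeMonoid.lift_eval_of]
      · rw [M.path_cons_iff, ← hf]
        simp [M.path_nil_iff]
    · refine ⟨f a * s, ?_, fun q r => ?_⟩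
      · rw [FreeMonoid.ofList_cons, map_mul, h, FreeMonoid.lift_eval_of, WithOne.coe_mul]
      · rw [M.path_cons_iff, PairSem.mul_eq_some]
        simp only [hf, hs]

theorem statement1 {A Q T : Type} [Fintype A] [DecidableEq A] [Fintype Q] [DecidableEq Q]
    [Monoid T] [Fintype T] [DecidableEq T]
    (τ : FreeMonoid Bool →* T) (G : Finset T)
    (N : NFA' A Q) (hcompat : N.trans.card ≤ G.card)
    (ι : {x // x ∈ N.trans} → T) (hι : Function.Injective ι) (hιG : ∀ x, ι x ∈ G) :
    ∃ (Nm : Type) (_ : Monoid Nm) (_ : Fintype Nm) (β : FreeMonoid (A × T) →* Nm),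
      Recognizes β (KAP N ι) ∧ Fintype.card Nm ≤ (Fintype.card Q) ^ 2 + 2 := by
  have hM : ∀ q r q' r' a, (q, a, r) ∈ (N.relabel ι).trans →
      (q', a, r') ∈ (N.relabel ι).trans → q = q' ∧ r = r' := by
    intro q r q' r' a h h'
    simp only [NFA'.relabel, Finset.mem_image] at h h'
    obtain ⟨x, -, hx⟩ := h
    obtain ⟨y, -, hy⟩ := h'
    simp only [Prod.ext_iff] at hx hy
    have : x = y := hι (hx.2.1.2.trans hy.2.1.2.symm)
    subst this
    exact ⟨hx.1.symm.trans hy.1, hx.2.2.symm.trans hy.2.2⟩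
  choose f hf using (N.relabel ι).exists_letter hM
  let e : WithOne (PairSem Q) ≃ Option (Option (Q × Q)) :=
    (Equiv.refl (Option (PairSem Q))).trans (PairSem.equiv Q).optionCongr
  refine ⟨WithOne (PairSem Q), inferInstance, Fintype.ofEquiv _ e.symm,
    FreeMonoid.lift (fun a => (f a : WithOne (PairSem Q))), ?_, ?_⟩
  · refine ⟨{x | (x = 1 ∧ ∃ q ∈ N.start, q ∈ N.accept) ∨ ∃ q ∈ N.start, ∃ r ∈ N.accept,
      x = ((PairSem.pair q r : PairSem Q) : WithOne (PairSem Q))}, ?_⟩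
    ext w
    change (∃ q ∈ N.start, ∃ r ∈ N.accept, (N.relabel ι).Path q w r) ↔ _ ∨ _
    rcases (N.relabel ι).lift_spec f hf w with ⟨rfl, h⟩ | ⟨s, h, hs⟩
    · rw [h]
      simp [NFA'.path_nil_iff]
    · rw [h]
      simp [hs, WithOne.coe_inj]
  · rw [Fintype.ofEquiv_card]
    simp [sq]
end

section
/- Let C be a finite quotienting Boolean algebra of regular languages. For every k ∈ ℕ and every level n ∈ ½ℕ, the tagging (τ_k: 𝔼* → T_k, T_k), where T_k is the cyclic monoid ℤ/kℤ and τ_k maps every letter of 𝔼 to the generator 1 (so τ_k computes the length of a word modulo k), fools the class C_𝔼[n]. -/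
/-! Infrastructure: classes of languages (one set of languages for every finite
alphabet, alphabets being modelled as types), quotienting lattices, Boolean and
polynomial closure, separation, regular languages, recognition by monoid morphisms,
and the notions of extension and fooling tagging from the paper. The fixed two-letter
alphabet `𝔼 = {0,1}` is modelled as `Bool`, and the disjoint union `A ∪ 𝔼` as the sum
type `A ⊕ Bool`. On `Language A` (which is `Set (List A)`) we use the lattice
operations `≤, ⊓, ⊔, ⊥` for `⊆, ∩, ∪, ∅`. -/

/-- A class of languages: to every alphabet it associates a set of languages. -/
abbrev LangClass : Type 1 := ∀ A : Type, Set (Language A)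

/-- A language is regular when it is recognized by a DFA with finitely many states. -/
def IsRegularLang {A : Type} (L : Language A) : Prop :=
  ∃ (σ : Type) (_ : Fintype σ) (M : DFA A σ), M.accepts = L

/-- `C` is a lattice (of languages): each `C(A)` contains `∅` and `A*` and is closed
under finite union and finite intersection. -/
def IsLatticeClass (C : LangClass) : Prop :=
  ∀ (A : Type) [Fintype A], (⊥ : Language A) ∈ C A ∧ (⊤ : Language A) ∈ C A ∧
    ∀ K L : Language A, K ∈ C A → L ∈ C A → K ⊔ L ∈ C A ∧ K ⊓ L ∈ C A

/-- `C` is quotienting: closed under left and right quotients by words. -/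
def IsQuotienting (C : LangClass) : Prop :=
  ∀ (A : Type) [Fintype A], ∀ L ∈ C A, ∀ u : List A,
    {w : List A | u ++ w ∈ L} ∈ C A ∧ {w : List A | w ++ u ∈ L} ∈ C A

/-- `C` is closed under inverse images of monoid morphisms between free monoids. -/
def ClosedInvImage (C : LangClass) : Prop :=
  ∀ (A B : Type) [Fintype A] [Fintype B] (φ : FreeMonoid A →* FreeMonoid B),
    ∀ L ∈ C B, {w : List A | FreeMonoid.toList (φ (FreeMonoid.ofList w)) ∈ L} ∈ C A

/-- Boolean closure: the least set of languages containing `S` and closed under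
Boolean operations (union, intersection, complement). -/
inductive BoolClosure {A : Type} (S : Set (Language A)) : Language A → Prop
  | base {L : Language A} : L ∈ S → BoolClosure S L
  | compl {L : Language A} : BoolClosure S L → BoolClosure S Lᶜ
  | union {K L : Language A} : BoolClosure S K → BoolClosure S L → BoolClosure S (K ⊔ L)
  | inter {K L : Language A} : BoolClosure S K → BoolClosure S L → BoolClosure S (K ⊓ L)

/-- Polynomial closure: the least set of languages containing `S` and closed under
finite union and marked concatenation `K a L`. -/
inductive PolClosure {A : Type} (S : Set (Language A)) : Language A → Prop
  | base {L : Language A} : L ∈ S → PolClosure S L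
  | union {K L : Language A} : PolClosure S K → PolClosure S L → PolClosure S (K ⊔ L)
  | marked {K L : Language A} (a : A) :
      PolClosure S K → PolClosure S L → PolClosure S (K * {[a]} * L)

/-- Level `k/2` of the concatenation hierarchy of basis `C` (levels are counted in
half units: index `k` is level `k/2`, so `C[0] = C`, `C[n + 1/2] = Pol(C[n])` and
`C[n + 1] = Bool(C[n + 1/2])`). -/
def hlevel (C : LangClass) : ℕ → LangClass
  | 0 => C
  | k + 1 => fun A =>
      if k % 2 = 0 then {L | PolClosure (hlevel C k A) L}
      else {L | BoolClosure (hlevel C k A) L}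

/-- `L₁` is `𝒞`-separable from `L₂`: some `K ∈ 𝒞` includes `L₁` and is disjoint
from `L₂`. -/
def Separable {A : Type} (𝒞 : Set (Language A)) (L₁ L₂ : Language A) : Prop :=
  ∃ K ∈ 𝒞, L₁ ≤ K ∧ L₂ ⊓ K = ⊥

/-- `γ : (A ∪ 𝔼)* → A*`, the morphism erasing the letters of `𝔼`. -/
def eraseE {A : Type} (w : List (A ⊕ Bool)) : List A :=
  w.filterMap (fun x => Sum.elim some (fun _ => none) x)

/-- `λᵤ : A* → (A ∪ 𝔼)*`, the morphism defined by `λᵤ(a) = a · u`. -/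
def padWith {A : Type} (u : List Bool) (w : List A) : List (A ⊕ Bool) :=
  w.flatMap (fun a => Sum.inl a :: u.map Sum.inr)

/-- `D` is an extension of `C`. -/
def Extension (C D : LangClass) : Prop :=
  ∀ (A : Type) [Fintype A],
    (∀ K ∈ C A, {w : List (A ⊕ Bool) | eraseE w ∈ K} ∈ D (A ⊕ Bool)) ∧
    (∀ u : List Bool, ∀ K ∈ D (A ⊕ Bool), {w : List A | padWith u w ∈ K} ∈ C A)

/-- The tagging `P = (τ : 𝔼* → T, G)` fools the class `D`. -/
def Fools {T : Type} [Monoid T] (τ : FreeMonoid Bool →* T) (G : Finset T)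
    (D : LangClass) : Prop :=
  ∀ (A : Type) [Fintype A] (M : Type) [Monoid M] [Fintype M]
    (α : FreeMonoid (A ⊕ Bool) →* M),
    (∀ L : Language (A ⊕ Bool), Recognizes α L → BoolClosure (D (A ⊕ Bool)) L) →
    ∃ s : M, ∀ t ∈ G, ∃ w : List Bool,
      α (FreeMonoid.ofList (w.map Sum.inr)) = s ∧ τ (FreeMonoid.ofList w) = t

/-- `C` is a quotienting Boolean algebra: a quotienting lattice closed under
complement. -/
def IsQBA (C : LangClass) : Prop :=
  IsLatticeClass C ∧ IsQuotienting C ∧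
    ∀ (A : Type) [Fintype A], ∀ L ∈ C A, Lᶜ ∈ C A

/-- `C` is a finite class: `C(A)` is a finite set for every alphabet. -/
def IsFiniteClass (C : LangClass) : Prop :=
  ∀ (A : Type) [Fintype A], (C A).Finite

/-- The class `C_𝔼`, defined on the alphabets `A ∪ 𝔼`:
`C_𝔼(A ∪ 𝔼) = {γ⁻¹(L) | L ∈ C(A)}` where `γ` erases the letters of `𝔼`. -/
def Ctag (C : LangClass) (A : Type) : Set (Language (A ⊕ Bool)) :=
  {L | ∃ K ∈ C A, L = {w : List (A ⊕ Bool) | eraseE w ∈ K}}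

/-- Level `k/2` of the concatenation hierarchy of a basis defined on the alphabets
`A ∪ 𝔼` (such as `C_𝔼`); indexing as in `hlevel`. -/
def hlevelS (D : ∀ A : Type, Set (Language (A ⊕ Bool))) :
    ℕ → ∀ A : Type, Set (Language (A ⊕ Bool))
  | 0 => D
  | k + 1 => fun A =>
      if k % 2 = 0 then {L | PolClosure (hlevelS D k A) L}
      else {L | BoolClosure (hlevelS D k A) L}

/-- `D` (a class defined on the alphabets `A ∪ 𝔼`) is an extension of `C`. -/
def ExtensionS (C : LangClass) (D : ∀ A : Type, Set (Language (A ⊕ Bool))) : Prop :=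
  ∀ (A : Type) [Fintype A],
    (∀ K ∈ C A, {w : List (A ⊕ Bool) | eraseE w ∈ K} ∈ D A) ∧
    (∀ u : List Bool, ∀ K ∈ D A, {w : List A | padWith u w ∈ K} ∈ C A)

/-- The tagging `P = (τ : 𝔼* → T, G)` fools the class `D` (defined on the alphabets
`A ∪ 𝔼`). -/
def FoolsS {T : Type} [Monoid T] (τ : FreeMonoid Bool →* T) (G : Finset T)
    (D : ∀ A : Type, Set (Language (A ⊕ Bool))) : Prop :=
  ∀ (A : Type) [Fintype A] (M : Type) [Monoid M] [Fintype M]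
    (α : FreeMonoid (A ⊕ Bool) →* M),
    (∀ L : Language (A ⊕ Bool), Recognizes α L → BoolClosure (D A) L) →
    ∃ s : M, ∀ t ∈ G, ∃ w : List Bool,
      α (FreeMonoid.ofList (w.map Sum.inr)) = s ∧ τ (FreeMonoid.ofList w) = t


theorem split_two {B : Type} (a : B) (q y : List B) : ∀ (x p : List B), x ++ y = p ++ a :: q →
    (∃ z, x = p ++ a :: z ∧ q = z ++ y) ∨ (∃ z, y = z ++ a :: q ∧ p = x ++ z)
  | [], p, h => Or.inr ⟨p, by simpa using h, by simp⟩
  | b :: x, [], h => by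
      simp only [List.cons_append, List.nil_append, List.cons.injEq] at h
      exact Or.inl ⟨x, by simp [h.1], h.2.symm⟩
  | b :: x, d :: p, h => by
      simp only [List.cons_append, List.cons.injEq] at h
      obtain ⟨rfl, h⟩ := h
      rcases split_two a q y x p h with ⟨z, h1, h2⟩ | ⟨z, h1, h2⟩
      · exact Or.inl ⟨z, by simp [h1], h2⟩
      · exact Or.inr ⟨z, h1, by simp [h2]⟩

theorem split_three {B : Type} (a c : B) (m : ℕ) (x y p q : List B)
    (h : x ++ (List.replicate m c ++ y) = p ++ a :: q) :
    (∃ z, x = p ++ a :: z ∧ q = z ++ (List.replicate m c ++ y)) ∨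
    (∃ z, y = z ++ a :: q ∧ p = x ++ (List.replicate m c ++ z)) ∨
    (∃ i j, i + j + 1 = m ∧ a = c ∧ p = x ++ List.replicate i c ∧
      q = List.replicate j c ++ y) := by
  rcases split_two a q _ x p h with h | ⟨z, h1, h2⟩
  · exact Or.inl h
  · rcases split_two a q y _ z h1 with ⟨z', h3, h4⟩ | ⟨z', h3, h4⟩
    · right; right
      have h5 := h3.symm
      rw [List.append_eq_replicate_iff] at h5
      obtain ⟨hl, hz, hz'⟩ := h5
      rw [List.eq_replicate_iff] at hz'
      refine ⟨z.length, z'.length, by simp at hl; omega, hz'.2 a (by simp), ?_, ?_⟩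
      · rw [h2, ← hz]
      · rw [h4]; congr 1
        rw [List.eq_replicate_iff]
        exact ⟨rfl, fun b hb => hz'.2 b (by simp [hb])⟩
    · exact Or.inr (Or.inl ⟨z', h3, by rw [h2, h4]⟩)

/-- `L` does not see the exact length of long blocks of the letter `c`. -/
def ApAt {B : Type} (c : B) (L : Language B) : Prop :=
  ∃ N : ℕ, ∀ m ≥ N, ∀ x y : List B,
    (x ++ (List.replicate m c ++ y) ∈ L ↔ x ++ (List.replicate (m + 1) c ++ y) ∈ L)

theorem mem_marked {B : Type} (a : B) (K L : Language B) (w : List B) :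
    w ∈ K * {[a]} * L ↔ ∃ p q, p ∈ K ∧ q ∈ L ∧ w = p ++ a :: q := by
  simp only [Language.mem_mul]
  constructor
  · rintro ⟨_, ⟨p, hp, b, hb, rfl⟩, q, hq, rfl⟩
    obtain rfl : b = [a] := hb
    exact ⟨p, q, hp, hq, by simp⟩
  · rintro ⟨p, q, hp, hq, rfl⟩
    exact ⟨p ++ [a], ⟨p, hp, [a], rfl, rfl⟩, q, hq, by simp⟩

theorem apAt_marked {B : Type} (c a : B) (K L : Language B) (hK : ApAt c K) (hL : ApAt c L) :
    ApAt c (K * {[a]} * L) := by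
  obtain ⟨N, hN⟩ := hK
  obtain ⟨N', hN'⟩ := hL
  refine ⟨N + N' + 1, fun m hm x y => ?_⟩
  rw [mem_marked, mem_marked]
  constructor
  · rintro ⟨p, q, hp, hq, h⟩
    rcases split_three a c m x y p q h with ⟨z, rfl, rfl⟩ | ⟨z, rfl, rfl⟩ |
      ⟨i, j, hij, rfl, rfl, rfl⟩
    · exact ⟨p, _, hp, (hN' m (by omega) _ _).1 hq, by simp⟩
    · exact ⟨_, q, (hN m (by omega) _ _).1 hp, hq, by simp⟩
    · by_cases hi : N ≤ i
      · refine ⟨x ++ (List.replicate (i + 1) a ++ []), _,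
          (hN i hi x []).1 (by simpa using hp), hq, ?_⟩
        rw [← hij, show i + j + 1 + 1 = (i + 1) + (j + 1) by omega, List.replicate_add _ (j + 1)]
        simp [List.replicate_succ]
      · refine ⟨_, [] ++ (List.replicate (j + 1) a ++ y), hp,
          (hN' j (by omega) [] y).1 (by simpa using hq), ?_⟩
        rw [← hij, show i + j + 1 + 1 = i + (j + 1 + 1) by omega, List.replicate_add i]
        simp [List.replicate_succ]
  · rintro ⟨p, q, hp, hq, h⟩
    rcases split_three a c (m + 1) x y p q h with ⟨z, rfl, rfl⟩ | ⟨z, rfl, rfl⟩ |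
      ⟨i, j, hij, rfl, rfl, rfl⟩
    · exact ⟨p, _, hp, (hN' m (by omega) _ _).2 hq, by simp⟩
    · exact ⟨_, q, (hN m (by omega) _ _).2 hp, hq, by simp⟩
    · by_cases hi : N + 1 ≤ i
      · obtain ⟨i, rfl⟩ : ∃ i', i = i' + 1 := ⟨i - 1, by omega⟩
        refine ⟨x ++ (List.replicate i a ++ []), _,
          (hN i (by omega) x []).2 (by simpa using hp), hq, ?_⟩
        rw [show m = i + (j + 1) by omega, List.replicate_add i]
        simp [List.replicate_succ]
      · obtain ⟨j, rfl⟩ : ∃ j', j = j' + 1 := ⟨j - 1, by omega⟩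
        refine ⟨_, [] ++ (List.replicate j a ++ y), hp,
          (hN' j (by omega) [] y).2 (by simpa using hq), ?_⟩
        rw [show m = i + (j + 1) by omega, List.replicate_add i]
        simp [List.replicate_succ]

theorem apAt_union {B : Type} (c : B) (K L : Language B) (hK : ApAt c K) (hL : ApAt c L) :
    ApAt c (K ⊔ L) := by
  obtain ⟨N, hN⟩ := hK
  obtain ⟨N', hN'⟩ := hL
  exact ⟨N + N', fun m hm x y => or_congr (hN m (by omega) x y) (hN' m (by omega) x y)⟩

theorem apAt_inter {B : Type} (c : B) (K L : Language B) (hK : ApAt c K) (hL : ApAt c L) :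
    ApAt c (K ⊓ L) := by
  obtain ⟨N, hN⟩ := hK
  obtain ⟨N', hN'⟩ := hL
  exact ⟨N + N', fun m hm x y => and_congr (hN m (by omega) x y) (hN' m (by omega) x y)⟩

theorem apAt_compl {B : Type} (c : B) (K : Language B) (hK : ApAt c K) : ApAt c Kᶜ := by
  obtain ⟨N, hN⟩ := hK
  exact ⟨N, fun m hm x y => not_congr (hN m hm x y)⟩

theorem apAt_bool {B : Type} (c : B) (S : Set (Language B)) (hS : ∀ L ∈ S, ApAt c L)
    (L : Language B) (h : BoolClosure S L) : ApAt c L := by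
  induction h with
  | base h => exact hS _ h
  | compl _ ih => exact apAt_compl c _ ih
  | union _ _ ih1 ih2 => exact apAt_union c _ _ ih1 ih2
  | inter _ _ ih1 ih2 => exact apAt_inter c _ _ ih1 ih2

theorem apAt_pol {B : Type} (c : B) (S : Set (Language B)) (hS : ∀ L ∈ S, ApAt c L)
    (L : Language B) (h : PolClosure S L) : ApAt c L := by
  induction h with
  | base h => exact hS _ h
  | union _ _ ih1 ih2 => exact apAt_union c _ _ ih1 ih2
  | marked a _ _ ih1 ih2 => exact apAt_marked c a _ _ ih1 ih2

theorem eraseE_block {A : Type} (b : Bool) (m : ℕ) (x y : List (A ⊕ Bool)) :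
    eraseE (x ++ (List.replicate m (Sum.inr b) ++ y)) = eraseE x ++ eraseE y := by
  have h : List.filterMap (fun x : A ⊕ Bool => Sum.elim some (fun _ => none) x)
      (List.replicate m (Sum.inr b)) = [] := by
    rw [List.filterMap_eq_nil_iff]
    intro a ha
    rw [List.eq_of_mem_replicate ha]
    rfl
  simp only [eraseE, List.filterMap_append, h, List.nil_append]

theorem apAt_level (C : LangClass) (A : Type) (b : Bool) (n : ℕ) :
    ∀ L ∈ hlevelS (Ctag C) n A, ApAt (Sum.inr b) L := by
  induction n with
  | zero =>
    rintro L ⟨K, -, rfl⟩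
    refine ⟨0, fun m _ x y => ?_⟩
    change eraseE _ ∈ K ↔ eraseE _ ∈ K
    rw [eraseE_block, eraseE_block]
  | succ n ih =>
    intro L hL
    simp only [hlevelS] at hL
    split_ifs at hL
    · exact apAt_pol _ _ ih L hL
    · exact apAt_bool _ _ ih L hL

/-- The tagging `(τ_k : 𝔼* → ℤ/kℤ, T_k)` (with `G = T_k` the whole cyclic monoid and
`τ_k` mapping every letter to the generator, i.e. computing the length modulo `k`)
fools `C_𝔼[n]`, for every level `n` (indexed in half units) of the concatenation
hierarchy of basis `C_𝔼`. (The hypothesis `NeZero k` ensures that `ℤ/kℤ` is a finite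
monoid, i.e. that `(τ_k, T_k)` is a genuine tagging.) -/
theorem statement7 (C : LangClass) (hqba : IsQBA C) (hfin : IsFiniteClass C)
    (hreg : ∀ (A : Type) [Fintype A], ∀ L ∈ C A, IsRegularLang L)
    (k : ℕ) [NeZero k] (n : ℕ) :
    FoolsS (FreeMonoid.lift fun _ : Bool => Multiplicative.ofAdd (1 : ZMod k))
      (Finset.univ : Finset (Multiplicative (ZMod k)))
      (hlevelS (Ctag C) n) := by
  intro A _ M _ _ α hα
  have hap : ∀ s : M, ApAt (Sum.inr false)
      ({w : List (A ⊕ Bool) | α (FreeMonoid.ofList w) = s} : Language (A ⊕ Bool)) := by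
    intro s
    exact apAt_bool _ _ (apAt_level C A false n) _ (hα _ ⟨{s}, rfl⟩)
  choose N hN using hap
  set N₀ := ∑ s, N s with hN₀
  let f : ℕ → M := fun m => α (FreeMonoid.ofList (List.replicate m (Sum.inr false)))
  have hstep : ∀ m, f (N₀ + m) = f N₀ := by
    intro m
    induction m with
    | zero => rfl
    | succ m ih =>
      have hle : N (f N₀) ≤ N₀ + m :=
        le_trans (Finset.single_le_sum (f := N) (fun _ _ => Nat.zero_le _)
          (Finset.mem_univ (f N₀))) (Nat.le_add_right _ _)
      have h1 := (hN (f N₀) (N₀ + m) hle [] []).1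
        (by rw [List.nil_append, List.append_nil]; exact ih)
      rw [List.nil_append, List.append_nil] at h1
      exact h1
  refine ⟨f N₀, fun t _ => ?_⟩
  have hk : 1 ≤ k := Nat.one_le_iff_ne_zero.2 (NeZero.ne k)
  have hbig : N₀ ≤ N₀ * k + (Multiplicative.toAdd t).val := by nlinarith
  refine ⟨List.replicate (N₀ * k + (Multiplicative.toAdd t).val) false, ?_, ?_⟩
  · rw [List.map_replicate]
    obtain ⟨d, hd⟩ := Nat.exists_eq_add_of_le hbig
    rw [hd]
    exact hstep d
  · rw [FreeMonoid.lift_ofList, List.map_replicate, List.prod_replicate, ← ofAdd_nsmul]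
    apply Multiplicative.toAdd.injective
    simp
end

section
/- If K ∈ C(A) separates L(A₁) from L(A₂) (i.e. L(A₁) ⊆ K and L(A₂) ∩ K = ∅), where A₁, A₂ are NFAs over A and P is a tagging compatible with both, then γ⁻¹(K) separates L[A₁,P] from L[A₂,P], where γ: (A ∪ 𝔼)* → A* is the morphism defined by γ(a) = a for a ∈ A and γ(b) = ε for b ∈ 𝔼. In particular L[A₁,P] ⊆ γ⁻¹(K) and L[A₂,P] ∩ γ⁻¹(K) = ∅. -/
theorem path_of_relabel {A Q T : Type} [DecidableEq Q] [DecidableEq A] [DecidableEq T]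
    (M : NFA' A Q) (ι : {x // x ∈ M.trans} → T) {q r : Q} {w : List (A × T)}
    (h : (M.relabel ι).Path q w r) : M.Path q (w.map Prod.fst) r := by
  induction h with
  | nil q => exact NFA'.Path.nil q
  | cons ht _ ih =>
    simp only [NFA'.relabel, Finset.mem_image] at ht
    obtain ⟨⟨⟨x, y, z⟩, hx⟩, -, he⟩ := ht
    simp only [Prod.mk.injEq] at he
    obtain ⟨rfl, rfl, rfl⟩ := he
    exact NFA'.Path.cons hx ih

theorem eraseE_map_inr {A : Type} (w : List Bool) :
    eraseE (w.map (Sum.inr : Bool → A ⊕ Bool)) = [] := by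
  induction w with
  | nil => rfl
  | cons b w ih => simpa [eraseE] using ih

theorem eraseE_append {A : Type} (u v : List (A ⊕ Bool)) :
    eraseE (u ++ v) = eraseE u ++ eraseE v := by
  simp [eraseE]

theorem eraseE_flatten {A : Type} (l : List (A × List Bool)) :
    eraseE ((l.map (fun p => (Sum.inl p.1 : A ⊕ Bool) :: p.2.map Sum.inr)).flatten)
      = l.map Prod.fst := by
  induction l with
  | nil => rfl
  | cons p l ih =>
    have h1 : ∀ (a : A) (u : List (A ⊕ Bool)), eraseE (Sum.inl a :: u) = a :: eraseE u := by
      intro a u; simp [eraseE]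
    rw [List.map_cons, List.flatten_cons, eraseE_append, ih, h1, eraseE_map_inr]
    rfl

theorem eraseE_mem_lang {A Q T : Type} [DecidableEq Q] [DecidableEq A] [DecidableEq T]
    [Monoid T] (M : NFA' A Q) (τ : FreeMonoid Bool →* T) (ι : {x // x ∈ M.trans} → T)
    (w : List (A ⊕ Bool)) (h : w ∈ LAP M τ ι) : eraseE w ∈ M.lang := by
  obtain ⟨w₀, l, rfl, q, hq, r, hr, hp⟩ := h
  refine ⟨q, hq, r, hr, ?_⟩
  rw [eraseE_append, eraseE_map_inr, eraseE_flatten]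
  have := path_of_relabel M ι hp
  rw [List.map_map] at this
  exact this

theorem statement19 {A Q₁ Q₂ T : Type} [Fintype A] [DecidableEq A]
    [Fintype Q₁] [DecidableEq Q₁] [Fintype Q₂] [DecidableEq Q₂]
    [Monoid T] [Fintype T] [DecidableEq T]
    (C : ∀ X : Type, Set (Language X))
    (τ : FreeMonoid Bool →* T) (G : Finset T)
    (N₁ : NFA' A Q₁) (N₂ : NFA' A Q₂)
    (hcompat₁ : N₁.trans.card ≤ G.card) (hcompat₂ : N₂.trans.card ≤ G.card)
    (ι₁ : {x // x ∈ N₁.trans} → T) (hι₁ : Function.Injective ι₁) (hι₁G : ∀ x, ι₁ x ∈ G)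
    (ι₂ : {x // x ∈ N₂.trans} → T) (hι₂ : Function.Injective ι₂) (hι₂G : ∀ x, ι₂ x ∈ G)
    (K : Language A) (hK : K ∈ C A)
    (hsep₁ : N₁.lang ≤ K) (hsep₂ : N₂.lang ⊓ K = ⊥) :
    LAP N₁ τ ι₁ ≤ {w : List (A ⊕ Bool) | eraseE w ∈ K} ∧
    LAP N₂ τ ι₂ ⊓ {w : List (A ⊕ Bool) | eraseE w ∈ K} = ⊥ := by
  refine ⟨fun w hw => hsep₁ (eraseE_mem_lang N₁ τ ι₁ w hw), ?_⟩
  rw [eq_bot_iff]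
  rintro w ⟨hw, hk⟩
  have h : eraseE w ∈ N₂.lang ⊓ K := ⟨eraseE_mem_lang N₂ τ ι₂ w hw, hk⟩
  rw [hsep₂] at h
  exact h.elim
end
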